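/- Let G⃗ be a subcubic oriented graph on n vertices (every vertex has total degree d⁺ + d⁻ at most 3). Then for any two 2-dicolourings α and β of G⃗ there is a redicolouring sequence from α to β of length at most 2·|{v : α(v) ≠ β(v)}|. In particular, the 2-dicolouring graph D_2(G⃗) is connected and has diameter at most 2n. -/

import Mathlib

/-- A relation (digraph) is acyclic if no vertex lies on a directed cycle. -/
def RelAcyclic {V : Type} (r : V → V → Prop) : Prop :=
  ∀ v, ¬ Relation.TransGen r v v

/-- `α` is a `k`-dicolouring of the digraph `D`: each colour class induces
an acyclic subdigraph. -/
def IsDicolouring {V : Type} (D : V → V → Prop) (k : ℕ) (α : V → Fin k) : Prop :=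
  ∀ c : Fin k, RelAcyclic (fun u v => D u v ∧ α u = c ∧ α v = c)

/-- Two colourings differ on exactly one vertex. -/
def RecolAdj {V : Type} {k : ℕ} (α β : V → Fin k) : Prop :=
  ∃ v, α v ≠ β v ∧ ∀ w, w ≠ v → α w = β w

/-- A single edge of the `k`-dicolouring graph `D_k(D)`. -/
def RecolStep {V : Type} (D : V → V → Prop) (k : ℕ) (α β : V → Fin k) : Prop :=
  IsDicolouring D k α ∧ IsDicolouring D k β ∧ RecolAdj α β

/-- The digraph `D` is `k`-mixing: the `k`-dicolouring graph is connected. -/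
def Mixing {V : Type} (D : V → V → Prop) (k : ℕ) : Prop :=
  ∀ α β : V → Fin k, IsDicolouring D k α → IsDicolouring D k β →
    Relation.ReflTransGen (RecolStep D k) α β

/-- Out-degree of `v` in the subdigraph of `D` induced by `S`. -/
noncomputable def outDegOn {V : Type} (D : V → V → Prop) (S : Set V) (v : V) : ℕ :=
  {w ∈ S | D v w}.ncard

/-- In-degree of `v` in the subdigraph of `D` induced by `S`. -/
noncomputable def inDegOn {V : Type} (D : V → V → Prop) (S : Set V) (v : V) : ℕ :=
  {w ∈ S | D w v}.ncard

/-- An oriented graph: a digraph with no digon (hence also no loop). -/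
def Oriented {V : Type} (D : V → V → Prop) : Prop :=
  ∀ u v, D u v → ¬ D v u

/-- A walk of length `m` in the `k`-dicolouring graph (a redicolouring sequence):
consecutive dicolourings differ on exactly one vertex. -/
def RecolWalk {V : Type} (D : V → V → Prop) (k m : ℕ) (γ : ℕ → V → Fin k) : Prop :=
  (∀ i ≤ m, IsDicolouring D k (γ i)) ∧ ∀ i < m, RecolAdj (γ i) (γ (i + 1))

/-- A frozen `k`-dicolouring: no single vertex can be recoloured so as to
yield another `k`-dicolouring. -/
def FrozenDicolouring {V : Type} [DecidableEq V] (D : V → V → Prop) (k : ℕ)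
    (α : V → Fin k) : Prop :=
  IsDicolouring D k α ∧
    ∀ (v : V) (c : Fin k), c ≠ α v → ¬ IsDicolouring D k (Function.update α v c)

/-- The arc set of a digraph, as a set of ordered pairs. -/
def arcSet {V : Type} (D : V → V → Prop) : Set (V × V) := {p | D p.1 p.2}

/-- The arcs of `D` lying inside a set `S` of vertices. -/
def arcSetOn {V : Type} (D : V → V → Prop) (S : Set V) : Set (V × V) :=
  {p | p.1 ∈ S ∧ p.2 ∈ S ∧ D p.1 p.2}

/-!
It suffices to bring `α` closer to `β` at a cost of two steps per vertex repaired.  If some vertex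
on which `α` and `β` differ can take its `β`-colour in `α`, or its `α`-colour in `β`, recolour it.
Otherwise pick a vertex `v` on which they differ; up to reversing all arcs it has a single
out-neighbour `u`.  The monochromatic cycles that block `v` in `α` and in `β` both pass through the
arc `v → u`, so `α u = β v` and `β u = α v`.  The cycles that block `v` and `u` in `α` leave `u`
through different vertices `w` and `w'`, coloured `α u` and `α v`, so `v` is the only in-neighbour
of `u`.  Hence recolouring `w` to `α v` frees `v`, then `u`, after which `w` can take back its
colour: four steps have exchanged the colours of `u` and `v`, which repairs both.
-/

open Function Relation

section Cycles

variable {V : Type} {r s : V → V → Prop}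

theorem exists_next_of_transGen_self {V : Type*} {r : V → V → Prop} {x : V}
    (h : TransGen r x x) :
    ∃ y, r x y ∧ TransGen r y y :=
  let ⟨y, hxy, hyx⟩ := TransGen.head'_iff.mp h
  ⟨y, hxy, TransGen.tail' hyx hxy⟩

theorem RelAcyclic.of_forall_mem_cycle (hs : RelAcyclic s)
    (h : ∀ x y, r x y → TransGen r x x → TransGen r y y → s x y) : RelAcyclic r := by
  intro v hv
  have lift : ∀ y, TransGen r v y → TransGen r y v → TransGen s v y := by
    intro y hvy
    induction hvy with
    | single hvy => exact fun hyv => .single (h _ _ hvy hv (hyv.tail hvy))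
    | tail hvx hxy ih =>
      exact fun hyv => (ih (hyv.head hxy)).tail
        (h _ _ hxy ((hyv.head hxy).trans hvx) (hyv.trans (hvx.tail hxy)))
  exact hs v (lift v hv hv)

theorem RelAcyclic.swap (h : RelAcyclic r) : RelAcyclic (swap r) :=
  fun v hv => h v (transGen_swap.mp hv)

end Cycles

section Dicolourings

variable {V : Type} {D : V → V → Prop} {k : ℕ} {α γ : V → Fin k} {v : V} {c : Fin k}

theorem Oriented.swap (hD : Oriented D) : Oriented (swap D) :=
  fun u v => hD v u

theorem Oriented.ne (hD : Oriented D) {u v : V} (h : D u v) : u ≠ v :=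
  fun e => hD u v h (e ▸ h)

/-- An arc of `D` whose two ends have the same colour. -/
def MonoArc {V C : Type*} (D : V → V → Prop) (γ : V → C) (u v : V) : Prop :=
  D u v ∧ γ u = γ v

theorem isDicolouring_iff_relAcyclic_monoArc :
    IsDicolouring D k γ ↔ RelAcyclic (MonoArc D γ) := by
  refine ⟨fun h v hv => h (γ v) v ?_, fun h c v hv => h v ?_⟩
  · have lift : ∀ y, TransGen (MonoArc D γ) v y →
        TransGen (fun a b => D a b ∧ γ a = γ v ∧ γ b = γ v) v y ∧ γ y = γ v := by
      intro y hvy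
      induction hvy with
      | single hvy => exact ⟨.single ⟨hvy.1, rfl, hvy.2.symm⟩, hvy.2.symm⟩
      | tail _ hxy ih =>
        have hy := hxy.2.symm.trans ih.2
        exact ⟨ih.1.tail ⟨hxy.1, ih.2, hy⟩, hy⟩
    exact (lift v hv).1
  · exact TransGen.mono (fun a b hab => ⟨hab.1, hab.2.1.trans hab.2.2.symm⟩) _ _ hv

theorem isDicolouring_swap : IsDicolouring (swap D) k γ ↔ IsDicolouring D k γ := by
  have reverse (E : V → V → Prop) (h : IsDicolouring E k γ) : IsDicolouring (swap E) k γ := by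
    rw [isDicolouring_iff_relAcyclic_monoArc] at h ⊢
    exact h.swap.of_forall_mem_cycle fun x y hxy _ _ => ⟨hxy.1, hxy.2.symm⟩
  exact ⟨reverse _, reverse _⟩

namespace IsDicolouring

theorem of_forall_ne (hα : IsDicolouring D k α)
    (h : ∀ x, α x ≠ γ x → ¬ TransGen (MonoArc D γ) x x) : IsDicolouring D k γ := by
  rw [isDicolouring_iff_relAcyclic_monoArc] at hα ⊢
  refine hα.of_forall_mem_cycle fun x y hxy hx hy => ⟨hxy.1, ?_⟩
  have hαx : α x = γ x := by_contra fun hne => h x hne hx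
  have hαy : α y = γ y := by_contra fun hne => h y hne hy
  rw [hαx, hαy, hxy.2]

variable [DecidableEq V]

theorem transGen_of_not_update (hα : IsDicolouring D k α)
    (h : ¬ IsDicolouring D k (update α v c)) :
    TransGen (MonoArc D (update α v c)) v v := by
  by_contra hv
  refine h (hα.of_forall_ne fun x hx => ?_)
  rcases eq_or_ne x v with rfl | hxv
  · exact hv
  · exact absurd (update_of_ne hxv c α).symm hx

theorem exists_in_of_not_update (hD : Oriented D) (hα : IsDicolouring D k α)
    (h : ¬ IsDicolouring D k (update α v c)) : ∃ p, D p v ∧ α p = c := by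
  obtain ⟨p, -, hpv⟩ := TransGen.tail'_iff.mp (hα.transGen_of_not_update h)
  have hne : p ≠ v := hD.ne hpv.1
  exact ⟨p, hpv.1, by simpa [update_of_ne hne] using hpv.2⟩

theorem exists_out_path_of_not_update (hD : Oriented D) (hα : IsDicolouring D k α)
    (h : ¬ IsDicolouring D k (update α v c)) :
    ∃ u w q, (D v u ∧ α u = c) ∧ (D u w ∧ α w = c) ∧ (D w q ∧ (q ≠ v → α q = c)) := by
  obtain ⟨u, hvu, hu⟩ := exists_next_of_transGen_self (hα.transGen_of_not_update h)
  obtain ⟨w, huw, hw⟩ := exists_next_of_transGen_self hu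
  obtain ⟨q, hwq, -⟩ := exists_next_of_transGen_self hw
  have huv : u ≠ v := (hD.ne hvu.1).symm
  have hwv : w ≠ v := fun e => hD _ _ hvu.1 (e ▸ huw.1)
  have hαu : α u = c := by simpa [update_of_ne huv] using hvu.2.symm
  have hαw : α w = c := by simpa [update_of_ne huv, update_of_ne hwv, hαu] using huw.2.symm
  refine ⟨u, w, q, ⟨hvu.1, hαu⟩, ⟨huw.1, hαw⟩, hwq.1, fun hqv => ?_⟩
  simpa [update_of_ne hwv, update_of_ne hqv, hαw] using hwq.2.symm

theorem comp_swap {u : V} (hα : IsDicolouring D k α) (hne : α v ≠ α u)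
    (hout : ∀ x, D v x → x = u) (hin : ∀ x, D x u → x = v) :
    IsDicolouring D k (α ∘ Equiv.swap u v) := by
  refine hα.of_forall_ne fun x hx hcyc => ?_
  obtain ⟨y, hxy, -⟩ := TransGen.head'_iff.mp hcyc
  obtain ⟨z, -, hzx⟩ := TransGen.tail'_iff.mp hcyc
  rcases eq_or_ne x u with rfl | hxu
  · obtain rfl := hin z hzx.1
    exact hne (by simpa using hzx.2.symm)
  rcases eq_or_ne x v with rfl | hxv
  · obtain rfl := hout y hxy.1
    exact hne (by simpa using hxy.2.symm)
  · exact hx (by simp [Equiv.swap_apply_of_ne_of_ne hxu hxv])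

end IsDicolouring

end Dicolourings

section Degrees

variable {V : Type*} {D : V → V → Prop}

/-- A digraph all of whose vertices have total degree at most three.  The degrees are extended
cardinalities, so an infinite neighbourhood is excluded rather than counted as empty. -/
def Subcubic (D : V → V → Prop) : Prop :=
  ∀ v, {w | D v w}.encard + {w | D w v}.encard ≤ 3

namespace Subcubic

theorem of_degOn_univ {V : Type} [Finite V] {D : V → V → Prop}
    (h : ∀ v, outDegOn D Set.univ v + inDegOn D Set.univ v ≤ 3) : Subcubic D := by
  intro v
  rw [← (Set.toFinite {w | D v w}).cast_ncard_eq, ← (Set.toFinite {w | D w v}).cast_ncard_eq]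
  have hv := h v
  simp only [outDegOn, inDegOn, Set.mem_univ, true_and] at hv
  exact_mod_cast hv

theorem swap (h : Subcubic D) : Subcubic (swap D) :=
  fun v => (add_comm _ _).trans_le (h v)

theorem neighbours_eq (h : Subcubic D) {p v w w' : V} (hp : D p v) (hw : D v w) (hw' : D v w')
    (hne : w ≠ w') : {x | D x v} = {p} ∧ {x | D v x} = {w, w'} := by
  have hin : {p} ⊆ {x | D x v} := Set.singleton_subset_iff.mpr hp
  have hout : {w, w'} ⊆ {x | D v x} := Set.pair_subset hw hw'
  have hin' := Set.encard_mono hin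
  have hout' := Set.encard_mono hout
  rw [Set.encard_singleton] at hin'
  rw [Set.encard_pair hne] at hout'
  have hin_le : {x | D x v}.encard ≤ 1 := by
    rw [← ENat.add_le_add_iff_left (show (2 : ℕ∞) ≠ ⊤ by simp)]
    exact (add_le_add_left hout' _).trans ((h v).trans_eq (by norm_num))
  have hout_le : {x | D v x}.encard ≤ 2 := by
    rw [← ENat.add_le_add_iff_right (show (1 : ℕ∞) ≠ ⊤ by simp)]
    exact (add_le_add_right hin' _).trans ((h v).trans_eq (by norm_num))
  refine ⟨((Set.toFinite _).eq_of_subset_of_encard_le hin ?_).symm,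
    ((Set.toFinite _).eq_of_subset_of_encard_le hout ?_).symm⟩
  · rwa [Set.encard_singleton]
  · rwa [Set.encard_pair hne]

theorem subsingleton_out_or_in (h : Subcubic D) (v : V) :
    {x | D v x}.Subsingleton ∨ {x | D x v}.Subsingleton := by
  refine or_iff_not_imp_left.mpr fun hout p hp p' hp' => ?_
  obtain ⟨w, hw, w', hw', hne⟩ := Set.not_subsingleton_iff.mp hout
  have hin := (h.neighbours_eq hp hw hw' hne).1
  exact (hin ▸ hp' : p' ∈ ({p} : Set V)).symm

end Subcubic

end Degrees

section RecolGraph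

variable {V : Type} {D : V → V → Prop} {k : ℕ} {α β : V → Fin k}

/-- The `k`-dicolouring graph of `D`.  Its vertices are all `k`-colourings rather than only the
dicolourings; those that are not dicolourings are isolated. -/
def recolGraph (D : V → V → Prop) (k : ℕ) : SimpleGraph (V → Fin k) where
  Adj := RecolStep D k
  symm := ⟨fun _ _ ⟨hα, hβ, v, hv, h⟩ => ⟨hβ, hα, v, hv.symm, fun w hw => (h w hw).symm⟩⟩
  loopless := ⟨fun _ ⟨_, _, _, hv, _⟩ => hv rfl⟩

theorem recolGraph_swap : recolGraph (swap D) k = recolGraph D k := by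
  ext α β
  simp only [recolGraph, RecolStep, isDicolouring_swap]

theorem edist_update_le_one [DecidableEq V] {v : V} {c : Fin k} (hα : IsDicolouring D k α)
    (hα' : IsDicolouring D k (update α v c)) :
    (recolGraph D k).edist α (update α v c) ≤ 1 := by
  rw [SimpleGraph.edist_le_one_iff_adj_or_eq]
  rcases eq_or_ne (α v) c with rfl | hne
  · exact Or.inr (update_eq_self v α).symm
  · exact Or.inl ⟨hα, hα', v, by simpa using hne, fun w hw => (update_of_ne hw c α).symm⟩

theorem exists_recolWalk_of_edist_le {n : ℕ} (hα : IsDicolouring D k α)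
    (h : (recolGraph D k).edist α β ≤ n) :
    ∃ (m : ℕ) (γ : ℕ → V → Fin k), γ 0 = α ∧ γ m = β ∧ RecolWalk D k m γ ∧ m ≤ n := by
  obtain ⟨p, hp⟩ := SimpleGraph.exists_walk_of_edist_ne_top (ne_top_of_le_ne_top (by simp) h)
  have hstep (i : ℕ) (hi : i < p.length) : RecolStep D k (p.getVert i) (p.getVert (i + 1)) :=
    p.adj_getVert_succ hi
  refine ⟨p.length, p.getVert, p.getVert_zero, p.getVert_length,
    ⟨fun i hi => ?_, fun i hi => (hstep i hi).2.2⟩, by exact_mod_cast hp ▸ h⟩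
  cases i with
  | zero => simpa using hα
  | succ i => exact (hstep i hi).2.1

end RecolGraph

section Switches

variable {V : Type} [DecidableEq V] {D : V → V → Prop} {k : ℕ} {α β : V → Fin k} {v u w : V}

/-- The configuration in which the colours of the ends of an arc `v → u` can be exchanged by first
recolouring an out-neighbour `w` of `u`. -/
structure IsSwitch (D : V → V → Prop) (α : V → Fin k) (v u w : V) : Prop where
  eq_of_out : ∀ x, D v x → x = u
  eq_of_in : ∀ x, D x u → x = v
  arc : D u w
  colour_ne : α v ≠ α u
  colour_eq : α w = α u
  colour_out : ∀ x, D u x → x ≠ w → α x = α v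
  exists_out : ∃ q, D w q ∧ (q ≠ v → α q = α u)

namespace IsSwitch

theorem isDicolouring_update (hs : IsSwitch D α v u w) (hD : Oriented D) (hsub : Subcubic D)
    (hα : IsDicolouring D k α) : IsDicolouring D k (update α w (α v)) := by
  by_contra hblocked
  obtain ⟨r, hrw, hαr⟩ := hα.exists_in_of_not_update hD hblocked
  obtain ⟨s, t, -, ⟨hws, hαs⟩, ⟨hst, hαt⟩, -⟩ := hα.exists_out_path_of_not_update hD hblocked
  obtain ⟨q, hwq, hαq⟩ := hs.exists_out
  have hur : u ≠ r := fun e => hs.colour_ne (hαr.symm.trans (e ▸ rfl))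
  have hout : {x | D w x} = {q} := (hsub.swap.neighbours_eq hwq hs.arc hrw hur).1
  obtain rfl : s = q := by simpa [hout] using (show s ∈ {x | D w x} from hws)
  obtain rfl : s = v := by
    by_contra hsv
    exact hs.colour_ne (hαs.symm.trans (hαq hsv))
  obtain rfl := hs.eq_of_out t hst
  exact hs.colour_ne hαt.symm

theorem isDicolouring_update_update (hs : IsSwitch D α v u w) (hD : Oriented D)
    (hα : IsDicolouring D k (update α w (α v))) :
    IsDicolouring D k (update (update α w (α v)) v (α u)) := by
  by_contra hblocked
  obtain ⟨s, t, -, ⟨hvs, -⟩, ⟨hst, hαt⟩, -⟩ := hα.exists_out_path_of_not_update hD hblocked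
  obtain rfl := hs.eq_of_out s hvs
  have hcolour : update α w (α v) t = α v := by
    rcases eq_or_ne t w with rfl | htw
    · exact update_self ..
    · rw [update_of_ne htw, hs.colour_out t hst htw]
  exact hs.colour_ne (hcolour.symm.trans hαt)

theorem edist_comp_swap_le (hs : IsSwitch D α v u w) (hD : Oriented D) (hsub : Subcubic D)
    (hα : IsDicolouring D k α) :
    (recolGraph D k).edist α (α ∘ Equiv.swap u v) ≤ 4 := by
  have huv : u ≠ v := fun e => hs.colour_ne (e ▸ rfl)
  have hwu : w ≠ u := (hD.ne hs.arc).symm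
  have hwv : w ≠ v := fun e => hs.colour_ne (e ▸ hs.colour_eq)
  set α₁ := update α w (α v) with hα₁
  set α₂ := update α₁ v (α u) with hα₂
  set α₃ := update α₂ u (α v) with hα₃
  have hα₄ : α ∘ Equiv.swap u v = update α₃ w (α w) := by
    rw [Equiv.comp_swap_eq_update, hα₃, hα₂, hα₁]
    grind [update_apply]
  have h₁ : IsDicolouring D k α₁ := hs.isDicolouring_update hD hsub hα
  have h₂ : IsDicolouring D k α₂ := hs.isDicolouring_update_update hD h₁
  have h₃ : IsDicolouring D k α₃ := by
    by_contra hblocked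
    obtain ⟨r, hru, hαr⟩ := h₂.exists_in_of_not_update hD hblocked
    obtain rfl := hs.eq_of_in r hru
    exact hs.colour_ne (by simpa [hα₂] using hαr.symm)
  have h₄ : IsDicolouring D k (α ∘ Equiv.swap u v) :=
    hα.comp_swap hs.colour_ne hs.eq_of_out hs.eq_of_in
  rw [hα₄] at h₄ ⊢
  have hcost₂ : (recolGraph D k).edist α α₂ ≤ 1 + 1 := SimpleGraph.edist_triangle.trans
    (add_le_add (edist_update_le_one hα h₁) (edist_update_le_one h₁ h₂))
  have hcost₄ : (recolGraph D k).edist α₂ (update α₃ w (α w)) ≤ 1 + 1 :=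
    SimpleGraph.edist_triangle.trans
      (add_le_add (edist_update_le_one h₂ h₃) (edist_update_le_one h₃ h₄))
  exact SimpleGraph.edist_triangle.trans ((add_le_add hcost₂ hcost₄).trans_eq (by norm_num))

end IsSwitch

/-- No vertex on which `α` and `β` differ can be given its `β`-colour in `α`. -/
def Stuck (D : V → V → Prop) (α β : V → Fin k) : Prop :=
  ∀ v, α v ≠ β v → ¬ IsDicolouring D k (update α v (β v))

theorem Stuck.swap (h : Stuck D α β) : Stuck (swap D) α β :=
  fun v hv hv' => h v hv (isDicolouring_swap.mp hv')

theorem exists_isSwitch_of_stuck (hD : Oriented D) (hsub : Subcubic D)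
    (hα : IsDicolouring D k α) (hβ : IsDicolouring D k β) (hαβ : Stuck D α β)
    (hβα : Stuck D β α) (hv : α v ≠ β v) (hout : {x | D v x}.Subsingleton) :
    ∃ u w, IsSwitch D α v u w ∧ α u = β v ∧ β u = α v := by
  obtain ⟨u, w, q, ⟨hvu, hαu⟩, ⟨huw, hαw⟩, hwq, hαq⟩ :=
    hα.exists_out_path_of_not_update hD (hαβ v hv)
  obtain ⟨u', -, -, ⟨hvu', hβu⟩, -⟩ := hβ.exists_out_path_of_not_update hD (hβα v hv.symm)
  obtain rfl : u' = u := hout hvu' hvu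
  have hu : α u' ≠ β u' := by rw [hαu, hβu]; exact hv.symm
  obtain ⟨w', -, -, ⟨huw', hαw'⟩, -⟩ := hα.exists_out_path_of_not_update hD (hαβ u' hu)
  rw [hβu] at hαw'
  have hww' : w ≠ w' := by rintro rfl; exact hv (hαw'.symm.trans hαw)
  obtain ⟨hin, hout'⟩ := hsub.neighbours_eq hvu huw huw' hww'
  refine ⟨u', w, ⟨fun x hx => hout hx hvu, fun x hx => ?_, huw, hαu ▸ hv, hαw.trans hαu.symm,
    fun x hx hxw => ?_, q, hwq, hαu ▸ hαq⟩, hαu, hβu⟩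
  · exact (hin ▸ hx : x ∈ ({v} : Set V))
  · obtain rfl | rfl := (hout' ▸ hx : x ∈ ({w, w'} : Set V))
    exacts [absurd rfl hxw, hαw']

theorem exists_swap_of_stuck (hD : Oriented D) (hsub : Subcubic D)
    (hα : IsDicolouring D k α) (hβ : IsDicolouring D k β) (hαβ : Stuck D α β)
    (hβα : Stuck D β α) (hv : α v ≠ β v) :
    ∃ u, α u = β v ∧ β u = α v ∧ IsDicolouring D k (α ∘ Equiv.swap u v) ∧
      (recolGraph D k).edist α (α ∘ Equiv.swap u v) ≤ 4 := by
  wlog hout : {x | D v x}.Subsingleton generalizing D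
  · simpa only [isDicolouring_swap, recolGraph_swap] using
      this hD.swap hsub.swap (isDicolouring_swap.mpr hα) (isDicolouring_swap.mpr hβ) hαβ.swap
        hβα.swap ((hsub.subsingleton_out_or_in v).resolve_left hout)
  obtain ⟨u, w, hs, hαu, hβu⟩ := exists_isSwitch_of_stuck hD hsub hα hβ hαβ hβα hv hout
  exact ⟨u, hαu, hβu, hα.comp_swap hs.colour_ne hs.eq_of_out hs.eq_of_in,
    hs.edist_comp_swap_le hD hsub hα⟩

end Switches

section Distance

variable {V : Type} {D : V → V → Prop} {k : ℕ} {α α' β : V → Fin k}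

/-- The set of vertices on which two colourings differ. -/
def diffSet {V C : Type*} (α β : V → C) : Set V :=
  {v | α v ≠ β v}

theorem diffSet_comm {V C : Type*} (α β : V → C) : diffSet α β = diffSet β α :=
  Set.ext fun _ => ne_comm

/-- `α'` is a dicolouring that agrees with `β` on a nonempty set `t` of vertices on which `α`
does not, agrees with `α` elsewhere, and is reached from `α` in at most two steps per vertex
of `t`. -/
def Approaches (D : V → V → Prop) (α β α' : V → Fin k) : Prop :=
  IsDicolouring D k α' ∧ ∃ t : Set V, t.Nonempty ∧ t ⊆ diffSet α β ∧
    diffSet α' β = diffSet α β \ t ∧ (recolGraph D k).edist α α' ≤ 2 * t.encard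

theorem Approaches.diffSet_ssubset (h : Approaches D α β α') : diffSet α' β ⊂ diffSet α β := by
  obtain ⟨-, t, hne, hsub, hdiff, -⟩ := h
  rw [hdiff]
  exact hsub.sdiff_ssubset_of_nonempty hne

theorem Approaches.edist_le (h : Approaches D α β α')
    (hα' : (recolGraph D k).edist α' β ≤ 2 * (diffSet α' β).encard) :
    (recolGraph D k).edist α β ≤ 2 * (diffSet α β).encard := by
  obtain ⟨-, t, -, hsub, hdiff, hcost⟩ := h
  calc (recolGraph D k).edist α β
      ≤ (recolGraph D k).edist α α' + (recolGraph D k).edist α' β := SimpleGraph.edist_triangle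
    _ ≤ 2 * t.encard + 2 * (diffSet α β \ t).encard := add_le_add hcost (hdiff ▸ hα')
    _ = 2 * (diffSet α β).encard := by
      rw [← mul_add, add_comm, Set.encard_sdiff_add_encard_of_subset hsub]

theorem approaches_update [DecidableEq V] {v : V} (hα : IsDicolouring D k α) (hv : α v ≠ β v)
    (hα' : IsDicolouring D k (update α v (β v))) : Approaches D α β (update α v (β v)) := by
  refine ⟨hα', {v}, Set.singleton_nonempty v, Set.singleton_subset_iff.mpr hv, ?_, ?_⟩
  · ext x
    rcases eq_or_ne x v with rfl | hx <;> simp [diffSet, *]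
  · rw [Set.encard_singleton]
    exact (edist_update_le_one hα hα').trans (by norm_num)

theorem approaches_comp_swap [DecidableEq V] {u v : V} (hv : α v ≠ β v) (hu : α u = β v)
    (hu' : β u = α v) (hα' : IsDicolouring D k (α ∘ Equiv.swap u v))
    (hcost : (recolGraph D k).edist α (α ∘ Equiv.swap u v) ≤ 4) :
    Approaches D α β (α ∘ Equiv.swap u v) := by
  have huv : u ≠ v := by rintro rfl; exact hv hu
  refine ⟨hα', {u, v}, Set.insert_nonempty _ _, Set.pair_subset ?_ hv, ?_, ?_⟩
  · exact fun e => hv (by rw [← hu', ← e, hu])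
  · ext x
    rcases eq_or_ne x u with rfl | hxu
    · simp [diffSet, hu']
    rcases eq_or_ne x v with rfl | hxv
    · simp [diffSet, hu]
    · simp [diffSet, Equiv.swap_apply_of_ne_of_ne hxu hxv, hxu, hxv]
  · rw [Set.encard_pair huv]
    exact hcost.trans (by norm_num)

theorem exists_approaches (hD : Oriented D) (hsub : Subcubic D) (hα : IsDicolouring D k α)
    (hβ : IsDicolouring D k β) (hne : α ≠ β) :
    (∃ α', Approaches D α β α') ∨ ∃ β', Approaches D β α β' := by
  classical
  by_cases hαβ : Stuck D α β
  · by_cases hβα : Stuck D β α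
    · obtain ⟨v, hv⟩ := Function.ne_iff.mp hne
      obtain ⟨u, hu, hu', hα', hcost⟩ := exists_swap_of_stuck hD hsub hα hβ hαβ hβα hv
      exact Or.inl ⟨_, approaches_comp_swap hv hu hu' hα' hcost⟩
    · simp only [Stuck, not_forall, not_not] at hβα
      obtain ⟨v, hv, hβ'⟩ := hβα
      exact Or.inr ⟨_, approaches_update hβ hv hβ'⟩
  · simp only [Stuck, not_forall, not_not] at hαβ
    obtain ⟨v, hv, hα'⟩ := hαβ
    exact Or.inl ⟨_, approaches_update hα hv hα'⟩

theorem edist_recolGraph_le (hD : Oriented D) (hsub : Subcubic D) (hα : IsDicolouring D k α)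
    (hβ : IsDicolouring D k β) :
    (recolGraph D k).edist α β ≤ 2 * (diffSet α β).encard := by
  rcases (diffSet α β).finite_or_infinite with hfin | hinf
  swap
  · simp [hinf.encard_eq]
  induction hn : (diffSet α β).ncard using Nat.strong_induction_on generalizing α β with
  | _ n ih =>
  by_cases hne : α = β
  · simp [hne]
  wlog h : ∃ α', Approaches D α β α' generalizing α β
  · rw [SimpleGraph.edist_comm, diffSet_comm]
    rw [diffSet_comm] at hn hfin
    exact this hβ hα hfin hn (Ne.symm hne)
      ((exists_approaches hD hsub hα hβ hne).resolve_left h)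
  obtain ⟨α', h⟩ := h
  have hlt := Set.ncard_lt_ncard h.diffSet_ssubset hfin
  exact h.edist_le (ih _ (hn ▸ hlt) h.1 hβ (hfin.subset h.diffSet_ssubset.subset) rfl)

end Distance

theorem subcubic_oriented_two_mixing_general {V : Type} {D : V → V → Prop} {k : ℕ}
    (hD : Oriented D) (hsub : Subcubic D) {α β : V → Fin k} (hα : IsDicolouring D k α)
    (hβ : IsDicolouring D k β) (hfin : {v | α v ≠ β v}.Finite) :
    ∃ (m : ℕ) (γ : ℕ → V → Fin k),
      γ 0 = α ∧ γ m = β ∧ RecolWalk D k m γ ∧ m ≤ 2 * {v | α v ≠ β v}.ncard := by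
  refine exists_recolWalk_of_edist_le hα ((edist_recolGraph_le hD hsub hα hβ).trans_eq ?_)
  rw [Nat.cast_mul, hfin.cast_ncard_eq]
  rfl

/-- Let `D` be a subcubic oriented graph on `n` vertices.  Then between any two
`2`-dicolourings `α` and `β` there is a redicolouring sequence of length at most
`2 · |{v : α v ≠ β v}|`; in particular `D_2(D)` is connected with diameter
at most `2n`. -/
theorem subcubic_oriented_two_mixing {V : Type} [Fintype V] (D : V → V → Prop)
    (horiented : Oriented D)
    (hdeg : ∀ v : V, outDegOn D Set.univ v + inDegOn D Set.univ v ≤ 3)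
    (α β : V → Fin 2) (hα : IsDicolouring D 2 α) (hβ : IsDicolouring D 2 β) :
    ∃ (m : ℕ) (γ : ℕ → V → Fin 2),
      γ 0 = α ∧ γ m = β ∧ RecolWalk D 2 m γ ∧
      m ≤ 2 * {v : V | α v ≠ β v}.ncard ∧
      m ≤ 2 * Fintype.card V := by
  obtain ⟨m, γ, h0, hm, hγ, hle⟩ := subcubic_oriented_two_mixing_general horiented
    (Subcubic.of_degOn_univ hdeg) hα hβ (Set.toFinite _)
  have hcard := Nat.card_eq_fintype_card (α := V) ▸ Set.ncard_le_card {v | α v ≠ β v}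
  exact ⟨m, γ, h0, hm, hγ, hle, hle.trans (Nat.mul_le_mul_left 2 hcard)⟩
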